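/- arXiv:1603.01729 — 7 statements merged into one kernel-verified Lean document; each statement's English description precedes it below -/
import Mathlib

section
/- Let Ω ⊆ {1,…,M} × {1,…,M} be a set of index pairs containing all diagonal pairs (k,k). Suppose X ∈ ℝ^{M×M} satisfies X_{kl} = 1 if k = l and X_{kl} = 0 if k ≠ l, for every (k,l) ∈ Ω (i.e., X is feasible for the constraint P_Ω(X) = I_M). Then for every decomposition X = Σ_{i=1}^m σ_i u_i v_iᵀ with σ_i ≥ 0 and unit vectors u_i, v_i ∈ ℝ^M, one has Σ_{i=1}^m σ_i ≥ M. Moreover, the identity matrix I_M is itself feasible and decomposes as I_M = Σ_{k=1}^M e_k e_kᵀ with total weight exactly M; hence the minimum nuclear norm among feasible matrices equals M and is attained at the full-rank matrix I_M. -/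
/-!
The trace is linear and `trace (u vᵀ) = u ⬝ᵥ v ≤ 1` for unit vectors, so the trace of a matrix is at
most the total weight of any of its decompositions. Feasibility fixes the diagonal, hence the trace.
-/

open Matrix

section OrderedRing

variable {R n ι : Type*} [CommRing R] [LinearOrder R] [IsStrictOrderedRing R] [Fintype n]

lemma dotProduct_le_one_of_sum_sq_le_one {u v : n → R}
    (hu : ∑ k, u k ^ 2 ≤ 1) (hv : ∑ k, v k ^ 2 ≤ 1) : u ⬝ᵥ v ≤ 1 := by
  have sq_le_one : (u ⬝ᵥ v) ^ 2 ≤ 1 :=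
    calc
      (u ⬝ᵥ v) ^ 2 ≤ (∑ k, u k ^ 2) * ∑ k, v k ^ 2 := Finset.sum_mul_sq_le_sq_mul_sq _ u v
      _ ≤ 1 := mul_le_one₀ hu (Finset.sum_nonneg fun k _ => sq_nonneg (v k)) hv
  exact le_of_abs_le ((sq_le_one_iff_abs_le_one _).mp sq_le_one)

lemma trace_sum_smul_vecMulVec_le_sum (s : Finset ι) {σ : ι → R} {u v : ι → n → R}
    (hσ : ∀ i ∈ s, 0 ≤ σ i) (hu : ∀ i ∈ s, ∑ k, u i k ^ 2 ≤ 1)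
    (hv : ∀ i ∈ s, ∑ k, v i k ^ 2 ≤ 1) :
    trace (∑ i ∈ s, σ i • vecMulVec (u i) (v i)) ≤ ∑ i ∈ s, σ i :=
  calc
    trace (∑ i ∈ s, σ i • vecMulVec (u i) (v i)) = ∑ i ∈ s, σ i * (u i ⬝ᵥ v i) := by
      simp only [trace_sum, trace_smul, trace_vecMulVec, smul_eq_mul]
    _ ≤ ∑ i ∈ s, σ i := Finset.sum_le_sum fun i hi =>
      mul_le_of_le_one_right (hσ i hi) (dotProduct_le_one_of_sum_sq_le_one (hu i hi) (hv i hi))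

end OrderedRing

lemma trace_eq_card_of_diag_eq_one {R n : Type*} [AddCommMonoidWithOne R] [Fintype n]
    {X : Matrix n n R} (hX : X.diag = 1) : trace X = Fintype.card n := by
  simp only [trace, hX, Pi.one_apply, Finset.sum_const, Finset.card_univ, nsmul_one]

lemma one_eq_sum_vecMulVec_single {R n : Type*} [NonAssocSemiring R] [Fintype n] [DecidableEq n] :
    (1 : Matrix n n R) = ∑ k, vecMulVec (Pi.single k 1) (Pi.single k 1) := by
  simp only [← single_eq_single_vecMulVec_single, sum_single_one]

theorem min_nuclear_norm_feasible_general {R n : Type*} [CommRing R] [LinearOrder R]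
    [IsStrictOrderedRing R] [Fintype n] [DecidableEq n] (Ω : Set (n × n))
    (hdiag : ∀ k, (k, k) ∈ Ω) :
    (∀ X : Matrix n n R, (∀ kl ∈ Ω, X kl.1 kl.2 = if kl.1 = kl.2 then 1 else 0) →
      ∀ (ι : Type*) [Fintype ι] (σ : ι → R) (u v : ι → n → R),
        (∀ i, 0 ≤ σ i) → (∀ i, ∑ k, u i k ^ 2 ≤ 1) → (∀ i, ∑ k, v i k ^ 2 ≤ 1) →
        X = ∑ i, σ i • vecMulVec (u i) (v i) →
        (Fintype.card n : R) ≤ ∑ i, σ i)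
    ∧ (∀ kl ∈ Ω, (1 : Matrix n n R) kl.1 kl.2 = if kl.1 = kl.2 then 1 else 0)
    ∧ (1 : Matrix n n R) = ∑ k, vecMulVec (Pi.single k 1) (Pi.single k 1)
    ∧ ∑ _k : n, (1 : R) = Fintype.card n := by
  refine ⟨fun X hX ι _ σ u v hσ hu hv hdecomp => ?_, fun _ _ => one_apply,
    one_eq_sum_vecMulVec_single, by simp⟩
  have diag_eq_one : X.diag = 1 := funext fun k => (hX (k, k) (hdiag k)).trans (if_pos rfl)
  calc
    (Fintype.card n : R) = trace X := (trace_eq_card_of_diag_eq_one diag_eq_one).symm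
    _ = trace (∑ i, σ i • vecMulVec (u i) (v i)) := congrArg trace hdecomp
    _ ≤ ∑ i, σ i := trace_sum_smul_vecMulVec_le_sum Finset.univ (fun i _ => hσ i)
      (fun i _ => hu i) (fun i _ => hv i)

/-- If `Ω` contains all diagonal pairs, any matrix feasible for `P_Ω(X) = I_M` has
nuclear norm (total weight of any nonnegative unit-vector decomposition) at least `M`;
moreover the identity matrix is feasible, decomposes as `∑ₖ eₖ eₖᵀ` with total weight
exactly `M`, so the minimum nuclear norm among feasible matrices is `M`, attained at `I_M`. -/
theorem min_nuclear_norm_feasible (M : ℕ) (Ω : Set (Fin M × Fin M))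
    (hdiag : ∀ k : Fin M, (k, k) ∈ Ω) :
    (∀ X : Matrix (Fin M) (Fin M) ℝ,
      (∀ kl ∈ Ω, X kl.1 kl.2 = if kl.1 = kl.2 then 1 else 0) →
      ∀ (m : ℕ) (σ : Fin m → ℝ) (u v : Fin m → Fin M → ℝ),
        (∀ i, 0 ≤ σ i) →
        (∀ i, ∑ k, (u i k) ^ 2 = 1) →
        (∀ i, ∑ k, (v i k) ^ 2 = 1) →
        X = ∑ i, σ i • vecMulVec (u i) (v i) →
        (M : ℝ) ≤ ∑ i, σ i)
    ∧ (∀ kl ∈ Ω, (1 : Matrix (Fin M) (Fin M) ℝ) kl.1 kl.2 = if kl.1 = kl.2 then 1 else 0)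
    ∧ (1 : Matrix (Fin M) (Fin M) ℝ)
        = ∑ k : Fin M, vecMulVec (Pi.single k (1 : ℝ)) (Pi.single k (1 : ℝ))
    ∧ ∑ _k : Fin M, (1 : ℝ) = M := by
  have general := min_nuclear_norm_feasible_general (R := ℝ) Ω hdiag
  rw [Fintype.card_fin] at general
  exact ⟨fun X hX m σ u v hσ hu hv =>
    general.1 X hX (Fin m) σ u v hσ (fun i => (hu i).le) (fun i => (hv i).le), general.2⟩
end

section
/- Let U, V ∈ ℝ^{M×r}, Σ ∈ ℝ^{r×r}, and let Q_U, Q_V ∈ ℝ^{r×r} be orthogonal matrices (Q_UᵀQ_U = Q_VᵀQ_V = I_r). For any triples ξ = (ξ_U, ξ_Σ, ξ_V) and ζ = (ζ_U, ζ_Σ, ζ_V) in ℝ^{M×r}×ℝ^{r×r}×ℝ^{M×r}, the Riemannian metric value is invariant under the equivalence-class transformation: g evaluated at the point (U Q_U, Q_Uᵀ Σ Q_V, V Q_V) on the transformed tangent vectors (ξ_U Q_U, Q_Uᵀ ξ_Σ Q_V, ξ_V Q_V) and (ζ_U Q_U, Q_Uᵀ ζ_Σ Q_V, ζ_V Q_V)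 equals g evaluated at (U, Σ, V) on (ξ, ζ). Explicitly, with Σ' = Q_Uᵀ Σ Q_V one has ⟨ξ_U Q_U, ζ_U Q_U Σ'Σ'ᵀ⟩ + ⟨Q_Uᵀξ_ΣQ_V, Q_Uᵀζ_ΣQ_V⟩ + ⟨ξ_V Q_V, ζ_V Q_V Σ'ᵀΣ'⟩ = ⟨ξ_U, ζ_U ΣΣᵀ⟩ + ⟨ξ_Σ, ζ_Σ⟩ + ⟨ξ_V, ζ_V ΣᵀΣ⟩. -/
/-! Since `P * Pᵀ = 1` and `Q * Qᵀ = 1`, the inner factors cancel in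
`(Pᵀ * S * Q) * (Pᵀ * S * Q)ᵀ = Pᵀ * (S * Sᵀ) * P`. The Gram weight `S * Sᵀ` is thus conjugated by
the same `P` that multiplies the tangent vectors, and cyclicity of the trace removes `P`.
Transposing `S` exchanges the roles of `P` and `Q`, which settles the weight `Sᵀ * S`. -/

open Matrix

section FrobeniusInner

variable {R l m n p : Type*} [CommSemiring R] [Fintype m] [Fintype n]

/-- The Frobenius inner product `⟨A, B⟩ = Tr(AᵀB)`, over an arbitrary commutative semiring. -/
def frobeniusInner (A B : Matrix m n R) : R :=
  (Aᵀ * B).trace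

theorem frobeniusInner_mul_right [Fintype p] [DecidableEq n] {Q : Matrix n p R}
    (hQ : Q * Qᵀ = 1) (A B : Matrix m n R) :
    frobeniusInner (A * Q) (B * Q) = frobeniusInner A B := by
  calc ((A * Q)ᵀ * (B * Q)).trace
      = (Qᵀ * (Aᵀ * B * Q)).trace := by simp only [transpose_mul, Matrix.mul_assoc]
    _ = (Aᵀ * B * (Q * Qᵀ)).trace := by rw [trace_mul_comm, Matrix.mul_assoc]
    _ = (Aᵀ * B).trace := by rw [hQ, Matrix.mul_one]

theorem frobeniusInner_transpose_mul_left [Fintype l] [DecidableEq m] {P : Matrix m l R}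
    (hP : P * Pᵀ = 1) (A B : Matrix m n R) :
    frobeniusInner (Pᵀ * A) (Pᵀ * B) = frobeniusInner A B := by
  calc ((Pᵀ * A)ᵀ * (Pᵀ * B)).trace
      = (Aᵀ * (P * Pᵀ) * B).trace := by
        simp only [transpose_mul, transpose_transpose, Matrix.mul_assoc]
    _ = (Aᵀ * B).trace := by rw [hP, Matrix.mul_one]

theorem transpose_mul_mul_mul_transpose_self [Fintype p] [DecidableEq n] {Q : Matrix n p R}
    (hQ : Q * Qᵀ = 1) (P : Matrix m l R) (S : Matrix m n R) :
    Pᵀ * S * Q * (Pᵀ * S * Q)ᵀ = Pᵀ * (S * Sᵀ) * P := by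
  calc Pᵀ * S * Q * (Pᵀ * S * Q)ᵀ
      = Pᵀ * S * (Q * Qᵀ) * (Sᵀ * P) := by
        simp only [transpose_mul, transpose_transpose, Matrix.mul_assoc]
    _ = Pᵀ * (S * Sᵀ) * P := by simp only [hQ, Matrix.mul_one, Matrix.mul_assoc]

theorem frobeniusInner_mul_conj [Fintype p] [DecidableEq n] {Q : Matrix n p R}
    (hQ : Q * Qᵀ = 1) (A B : Matrix m n R) (G : Matrix n n R) :
    frobeniusInner (A * Q) (B * Q * (Qᵀ * G * Q)) = frobeniusInner A (B * G) := by
  have cancel : B * Q * (Qᵀ * G * Q) = B * G * Q := by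
    calc B * Q * (Qᵀ * G * Q)
        = B * (Q * Qᵀ) * (G * Q) := by simp only [Matrix.mul_assoc]
      _ = B * G * Q := by rw [hQ, Matrix.mul_one, Matrix.mul_assoc]
  rw [cancel, frobeniusInner_mul_right hQ]

end FrobeniusInner

/-- Triples `(U, Σ, V)` of factors of `X = UΣVᵀ`. The ambient space is linear, so the same type
serves for points and for tangent vectors. -/
structure SVDTriple (R m n r s : Type*) where
  left : Matrix m r R
  core : Matrix r s R
  right : Matrix n s R

namespace SVDTriple

variable {R m n r s r' s' : Type*} [CommSemiring R] [Fintype r] [Fintype s]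

/-- The change of factors `(U, Σ, V) ↦ (UP, PᵀΣQ, VQ)`; orthogonal `P` and `Q` generate the
equivalence class of a point, and its differential acts on tangent vectors by the same formula. -/
def transform (P : Matrix r r' R) (Q : Matrix s s' R) (x : SVDTriple R m n r s) :
    SVDTriple R m n r' s' :=
  ⟨x.left * P, Pᵀ * x.core * Q, x.right * Q⟩

/-- The metric `g(ξ, ζ) = ⟨ξ_U, ζ_U ΣΣᵀ⟩ + ⟨ξ_Σ, ζ_Σ⟩ + ⟨ξ_V, ζ_V ΣᵀΣ⟩` at the point `x`. -/
def metric [Fintype m] [Fintype n] (x ξ ζ : SVDTriple R m n r s) : R :=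
  frobeniusInner ξ.left (ζ.left * (x.core * x.coreᵀ)) + frobeniusInner ξ.core ζ.core
    + frobeniusInner ξ.right (ζ.right * (x.coreᵀ * x.core))

end SVDTriple

theorem metric_invariant_general {R m n r s r' s' : Type*} [CommSemiring R]
    [Fintype m] [Fintype n] [Fintype r] [Fintype s] [Fintype r'] [Fintype s']
    [DecidableEq r] [DecidableEq s] {P : Matrix r r' R} {Q : Matrix s s' R}
    (hP : P * Pᵀ = 1) (hQ : Q * Qᵀ = 1) (x ξ ζ : SVDTriple R m n r s) :
    (x.transform P Q).metric (ξ.transform P Q) (ζ.transform P Q) = x.metric ξ ζ := by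
  have left_gram : Pᵀ * x.core * Q * (Pᵀ * x.core * Q)ᵀ = Pᵀ * (x.core * x.coreᵀ) * P :=
    transpose_mul_mul_mul_transpose_self hQ P x.core
  have right_gram : (Pᵀ * x.core * Q)ᵀ * (Pᵀ * x.core * Q) = Qᵀ * (x.coreᵀ * x.core) * Q := by
    simpa only [transpose_mul, transpose_transpose, Matrix.mul_assoc] using
      transpose_mul_mul_mul_transpose_self hP Q x.coreᵀ
  simp only [SVDTriple.metric, SVDTriple.transform]
  rw [left_gram, right_gram, frobeniusInner_mul_conj hP, frobeniusInner_mul_conj hQ,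
    frobeniusInner_mul_right hQ, frobeniusInner_transpose_mul_left hP]

/-- The Riemannian metric
`g(ξ,ζ) = ⟨ξ_U, ζ_U ΣΣᵀ⟩ + ⟨ξ_Σ, ζ_Σ⟩ + ⟨ξ_V, ζ_V ΣᵀΣ⟩`
is invariant under the equivalence-class transformation
`(U, Σ, V) ↦ (U Q_U, Q_Uᵀ Σ Q_V, V Q_V)` with `Q_U, Q_V` orthogonal. -/
theorem metric_invariant (M r : ℕ)
    (U V : Matrix (Fin M) (Fin r) ℝ) (S : Matrix (Fin r) (Fin r) ℝ)
    (QU QV : Matrix (Fin r) (Fin r) ℝ)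
    (hQU : QUᵀ * QU = 1) (hQV : QVᵀ * QV = 1)
    (ξU ζU ξV ζV : Matrix (Fin M) (Fin r) ℝ)
    (ξS ζS : Matrix (Fin r) (Fin r) ℝ) :
    ((ξU * QU)ᵀ * ((ζU * QU) * ((QUᵀ * S * QV) * (QUᵀ * S * QV)ᵀ))).trace
      + ((QUᵀ * ξS * QV)ᵀ * (QUᵀ * ζS * QV)).trace
      + ((ξV * QV)ᵀ * ((ζV * QV) * ((QUᵀ * S * QV)ᵀ * (QUᵀ * S * QV)))).trace
    = (ξUᵀ * (ζU * (S * Sᵀ))).trace + (ξSᵀ * ζS).trace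
      + (ξVᵀ * (ζV * (Sᵀ * S))).trace :=
  metric_invariant_general (mul_eq_one_comm.mp hQU) (mul_eq_one_comm.mp hQV)
    ⟨U, S, V⟩ ⟨ξU, ξS, ξV⟩ ⟨ζU, ζS, ζV⟩
end

section
/- Let U, V ∈ ℝ^{M×r} and Σ ∈ ℝ^{r×r}, and let η = (η_U, η_Σ, η_V) ∈ ℝ^{M×r}×ℝ^{r×r}×ℝ^{M×r}. Then g(η, (UΘ₁, ΣΘ₂ − Θ₁Σ, VΘ₂)) = 0 for all skew-symmetric matrices Θ₁, Θ₂ ∈ ℝ^{r×r} if and only if both S₁ = ΣΣᵀ η_Uᵀ U − Σ η_Σᵀ and S₂ = ΣᵀΣ η_Vᵀ V + η_Σᵀ Σ are symmetric. That is, the horizontal space (the g-orthogonal complement of the vertical space) consists exactly of the triples η for which S₁ and S₂ are symmetric. -/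
open Matrix

/-! Cycling traces rewrites the inner product of `η` with the vertical vector of `(Θ₁, Θ₂)` as
`Tr(S₁Θ₁) + Tr(S₂Θ₂)`. As `Θ₁` and `Θ₂` vary independently, both traces must vanish identically.
Testing against the elementary skew-symmetric matrices shows that the matrices trace-orthogonal to
all skew-symmetric ones are the symmetric ones. -/

section

variable {m n p q R : Type*} [Fintype m] [Fintype n] [Fintype p] [Fintype q]

theorem trace_mul_mul_mul_cycle [NonUnitalCommSemiring R]
    (A : Matrix p m R) (B : Matrix m n R) (C : Matrix n q R) (D : Matrix q p R) :
    (A * (B * C * D)).trace = (D * A * B * C).trace := by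
  rw [← Matrix.mul_assoc, Matrix.trace_mul_comm]
  simp only [Matrix.mul_assoc]

theorem isSymm_of_forall_trace_mul_skew_eq_zero [NonAssocRing R] {A : Matrix n n R}
    (hA : ∀ Θ : Matrix n n R, Θᵀ = -Θ → (A * Θ).trace = 0) : A.IsSymm := by
  classical
  refine IsSymm.ext fun i j ↦ sub_eq_zero.mp ?_
  have h_skew : (single i j (1 : R) - single j i 1)ᵀ = -(single i j 1 - single j i 1) := by
    rw [transpose_sub, transpose_single, transpose_single, neg_sub]
  simpa [Matrix.mul_sub, trace_mul_single] using hA _ h_skew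

theorem trace_mul_skew_eq_neg_self_of_isSymm [NonUnitalCommRing R] {A Θ : Matrix n n R}
    (hA : A.IsSymm) (hΘ : Θᵀ = -Θ) : (A * Θ).trace = -(A * Θ).trace :=
  calc
    (A * Θ).trace = (Θᵀ * Aᵀ).trace := by rw [← transpose_mul, trace_transpose]
    _ = -(Θ * A).trace := by rw [hΘ, hA.eq, Matrix.neg_mul, trace_neg]
    _ = -(A * Θ).trace := by rw [trace_mul_comm]

theorem trace_mul_skew_eq_zero_of_isSymm [CommRing R] (h_two : IsLeftRegular (2 : R))
    {A Θ : Matrix n n R} (hA : A.IsSymm) (hΘ : Θᵀ = -Θ) : (A * Θ).trace = 0 := by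
  rw [← h_two.mul_left_eq_zero_iff, two_mul, ← eq_neg_iff_add_eq_zero]
  exact trace_mul_skew_eq_neg_self_of_isSymm hA hΘ

theorem inner_vertical_eq_trace_add_trace [NonUnitalCommRing R]
    (U ηU : Matrix m p R) (V ηV : Matrix n q R) (S ηS : Matrix p q R)
    (Θ₁ : Matrix p p R) (Θ₂ : Matrix q q R) :
    (ηUᵀ * ((U * Θ₁) * (S * Sᵀ))).trace + (ηSᵀ * (S * Θ₂ - Θ₁ * S)).trace
        + (ηVᵀ * ((V * Θ₂) * (Sᵀ * S))).trace
      = ((S * Sᵀ * ηUᵀ * U - S * ηSᵀ) * Θ₁).trace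
        + ((Sᵀ * S * ηVᵀ * V + ηSᵀ * S) * Θ₂).trace := by
  have h_core : (ηSᵀ * (S * Θ₂ - Θ₁ * S)).trace
      = (ηSᵀ * S * Θ₂).trace - (S * ηSᵀ * Θ₁).trace := by
    rw [Matrix.mul_sub, trace_sub, ← Matrix.mul_assoc, ← Matrix.mul_assoc, trace_mul_cycle ηSᵀ Θ₁ S]
  rw [trace_mul_mul_mul_cycle, trace_mul_mul_mul_cycle, h_core, Matrix.sub_mul,
    Matrix.add_mul, trace_sub, trace_add]
  abel

theorem horizontal_space_characterization_general [CommRing R] (h_two : IsLeftRegular (2 : R))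
    (U ηU : Matrix m p R) (V ηV : Matrix n q R) (S ηS : Matrix p q R) :
    (∀ (Θ₁ : Matrix p p R) (Θ₂ : Matrix q q R), Θ₁ᵀ = -Θ₁ → Θ₂ᵀ = -Θ₂ →
      (ηUᵀ * ((U * Θ₁) * (S * Sᵀ))).trace + (ηSᵀ * (S * Θ₂ - Θ₁ * S)).trace
        + (ηVᵀ * ((V * Θ₂) * (Sᵀ * S))).trace = 0)
    ↔ (S * Sᵀ * ηUᵀ * U - S * ηSᵀ).IsSymm ∧ (Sᵀ * S * ηVᵀ * V + ηSᵀ * S).IsSymm := by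
  simp only [inner_vertical_eq_trace_add_trace]
  constructor
  · intro h
    constructor
    · exact isSymm_of_forall_trace_mul_skew_eq_zero fun Θ hΘ ↦ by simpa using h Θ 0 hΘ (by simp)
    · exact isSymm_of_forall_trace_mul_skew_eq_zero fun Θ hΘ ↦ by simpa using h 0 Θ (by simp) hΘ
  · rintro ⟨hS₁, hS₂⟩ Θ₁ Θ₂ hΘ₁ hΘ₂
    rw [trace_mul_skew_eq_zero_of_isSymm h_two hS₁ hΘ₁,
      trace_mul_skew_eq_zero_of_isSymm h_two hS₂ hΘ₂, add_zero]

end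

/-- Horizontal space characterization: a triple `η` is `g`-orthogonal to every vertical
vector `(UΘ₁, ΣΘ₂ − Θ₁Σ, VΘ₂)` with `Θ₁, Θ₂` skew-symmetric iff both
`S₁ = ΣΣᵀ η_Uᵀ U − Σ η_Σᵀ` and `S₂ = ΣᵀΣ η_Vᵀ V + η_Σᵀ Σ` are symmetric. -/
theorem horizontal_space_characterization (M r : ℕ)
    (U V : Matrix (Fin M) (Fin r) ℝ) (S : Matrix (Fin r) (Fin r) ℝ)
    (ηU ηV : Matrix (Fin M) (Fin r) ℝ) (ηS : Matrix (Fin r) (Fin r) ℝ) :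
    (∀ Θ₁ Θ₂ : Matrix (Fin r) (Fin r) ℝ, Θ₁ᵀ = -Θ₁ → Θ₂ᵀ = -Θ₂ →
      (ηUᵀ * ((U * Θ₁) * (S * Sᵀ))).trace + (ηSᵀ * (S * Θ₂ - Θ₁ * S)).trace
        + (ηVᵀ * ((V * Θ₂) * (Sᵀ * S))).trace = 0)
    ↔ ((S * Sᵀ * ηUᵀ * U - S * ηSᵀ)ᵀ = S * Sᵀ * ηUᵀ * U - S * ηSᵀ
        ∧ (Sᵀ * S * ηVᵀ * V + ηSᵀ * S)ᵀ = Sᵀ * S * ηVᵀ * V + ηSᵀ * S) :=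
  horizontal_space_characterization_general (IsRegular.of_ne_zero two_ne_zero).left U ηU V ηV S ηS
end

section
/- Let U, V ∈ ℝ^{M×r} have orthonormal columns (UᵀU = VᵀV = I_r) and let Σ ∈ ℝ^{r×r} be invertible. A triple ζ = (ζ_U, ζ_Σ, ζ_V) ∈ ℝ^{M×r}×ℝ^{r×r}×ℝ^{M×r} satisfies g(η, ζ) = 0 for every triple η = (η_U, η_Σ, η_V) with Uᵀη_U + η_UᵀU = 0 and Vᵀη_V + η_VᵀV = 0 (i.e., ζ lies in the normal space to the tangent space) if and only if ζ_Σ = 0 and there exist symmetric matrices B_U, B_V ∈ ℝ^{r×r} such that ζ_U = U B_U (ΣΣᵀ)^{-1} and ζ_V = V B_V (ΣᵀΣ)^{-1}. -/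
open Matrix

/-!
The condition `Uᵀ η + ηᵀ U = 0` says that `η` lies in the kernel of the derivative `L` at `U` of
the Gram map `U ↦ Uᵀ U`. In finite dimension the orthogonal complement of `ker L` is the range of
the adjoint of `L`, and that adjoint is `B ↦ U (B + Bᵀ)`. When `2 ≠ 0` every symmetric matrix has
the form `B + Bᵀ`, so the complement is `{U B | B symmetric}`. The weights `Σ Σᵀ` and `Σᵀ Σ` of the
metric are invertible and only multiply this description by an inverse on the right.
-/

section FrobeniusPairing

variable {m n R : Type*} [Fintype m] [Fintype n] [CommSemiring R]

/-- The Frobenius pairing `⟨A, X⟩ = Tr (Aᵀ X)`, as the map sending `X` to the linear functional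
`⟨·, X⟩`. -/
def frobeniusPairing : Matrix m n R →ₗ[R] Module.Dual R (Matrix m n R) :=
  LinearMap.mk₂ R (fun X A => (Aᵀ * X).trace)
    (fun X Y A => by rw [Matrix.mul_add, trace_add])
    (fun c X A => by rw [Matrix.mul_smul, trace_smul])
    (fun X A B => by rw [transpose_add, Matrix.add_mul, trace_add])
    (fun c X A => by rw [transpose_smul, Matrix.smul_mul, trace_smul])

theorem frobeniusPairing_apply (X A : Matrix m n R) :
    frobeniusPairing X A = (Aᵀ * X).trace :=
  rfl

theorem frobeniusPairing_injective :
    Function.Injective (frobeniusPairing (m := m) (n := n) (R := R)) := fun X Y h =>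
  ext_iff_trace_mul_left.mpr fun A => by
    simpa only [frobeniusPairing_apply, transpose_transpose] using DFunLike.congr_fun h Aᵀ

theorem frobeniusPairing_surjective :
    Function.Surjective (frobeniusPairing (m := m) (n := n) (R := R)) := by
  classical
  intro φ
  refine ⟨of fun i j => φ (single i j 1), Matrix.ext_linearMap _ fun i j => LinearMap.ext_ring ?_⟩
  simp [frobeniusPairing_apply, trace_single_mul]

theorem forall_trace_transpose_mul_eq_zero_iff {X : Matrix m n R} :
    (∀ A : Matrix m n R, (Aᵀ * X).trace = 0) ↔ X = 0 := by
  rw [← map_eq_zero_iff _ frobeniusPairing_injective, LinearMap.ext_iff]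
  rfl

end FrobeniusPairing

section GramDerivative

variable {m k R : Type*} [Fintype m] [CommSemiring R]

/-- The derivative `η ↦ Uᵀ η + ηᵀ U` at `U` of the Gram map `U ↦ Uᵀ U`. When `U` has orthonormal
columns, its kernel is the tangent space of the Stiefel manifold at `U`. -/
def gramDerivative (U : Matrix m k R) : Matrix m k R →ₗ[R] Matrix k k R where
  toFun η := Uᵀ * η + ηᵀ * U
  map_add' η ξ := by
    rw [transpose_add, Matrix.mul_add, Matrix.add_mul, add_add_add_comm]
  map_smul' c η := by
    rw [transpose_smul, Matrix.mul_smul, Matrix.smul_mul, ← smul_add, RingHom.id_apply]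

theorem gramDerivative_apply (U η : Matrix m k R) :
    gramDerivative U η = Uᵀ * η + ηᵀ * U :=
  rfl

theorem dualMap_gramDerivative_frobeniusPairing [Fintype k] (U : Matrix m k R)
    (B : Matrix k k R) :
    (gramDerivative U).dualMap (frobeniusPairing B) = frobeniusPairing (U * (B + Bᵀ)) := by
  ext1 η
  have trace_swap : (Uᵀ * η * B).trace = (ηᵀ * (U * Bᵀ)).trace := by
    rw [← trace_transpose, transpose_mul, transpose_mul, transpose_transpose, trace_mul_comm,
      Matrix.mul_assoc]
  calc ((Uᵀ * η + ηᵀ * U)ᵀ * B).trace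
      = (ηᵀ * (U * B)).trace + (Uᵀ * η * B).trace := by
        simp only [transpose_add, transpose_mul, transpose_transpose, Matrix.add_mul, trace_add,
          Matrix.mul_assoc]
    _ = (ηᵀ * (U * (B + Bᵀ))).trace := by
        rw [trace_swap, Matrix.mul_add, Matrix.mul_add, trace_add]

end GramDerivative

theorem exists_add_transpose_eq_iff_isSymm {k K : Type*} [DivisionSemiring K] [NeZero (2 : K)]
    {C : Matrix k k K} :
    (∃ B : Matrix k k K, B + Bᵀ = C) ↔ C.IsSymm := by
  constructor
  · rintro ⟨B, rfl⟩
    exact isSymm_add_transpose_self B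
  · intro hC
    refine ⟨(2⁻¹ : K) • C, ?_⟩
    rw [transpose_smul, hC.eq, ← add_smul, ← two_mul, mul_inv_cancel₀ two_ne_zero, one_smul]

section NormalSpace

variable {m n k K : Type*} [Fintype m] [Fintype n] [Fintype k] [Field K] [NeZero (2 : K)]

theorem frobeniusPairing_mem_dualAnnihilator_ker_gramDerivative_iff {U X : Matrix m k K} :
    frobeniusPairing X ∈ (LinearMap.ker (gramDerivative U)).dualAnnihilator ↔
      ∃ B : Matrix k k K, B.IsSymm ∧ X = U * B := by
  rw [← LinearMap.range_dualMap_eq_dualAnnihilator_ker, LinearMap.mem_range,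
    frobeniusPairing_surjective.exists]
  simp only [dualMap_gramDerivative_frobeniusPairing, frobeniusPairing_injective.eq_iff,
    ← exists_add_transpose_eq_iff_isSymm, exists_exists_eq_and, eq_comm (a := X)]

theorem forall_trace_transpose_mul_mul_eq_zero_iff [DecidableEq k] {U ζ : Matrix m k K}
    {W : Matrix k k K} (hW : IsUnit W.det) :
    (∀ η : Matrix m k K, Uᵀ * η + ηᵀ * U = 0 → (ηᵀ * (ζ * W)).trace = 0) ↔
      ∃ B : Matrix k k K, B.IsSymm ∧ ζ = U * B * W⁻¹ := by
  have mul_eq_iff (B : Matrix k k K) : ζ * W = U * B ↔ ζ = U * B * W⁻¹ :=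
    ⟨fun h => by rw [← h, mul_nonsing_inv_cancel_right _ _ hW],
      fun h => by rw [h, nonsing_inv_mul_cancel_right _ _ hW]⟩
  simp only [← mul_eq_iff, ← frobeniusPairing_mem_dualAnnihilator_ker_gramDerivative_iff,
    Submodule.mem_dualAnnihilator, LinearMap.mem_ker, gramDerivative_apply, frobeniusPairing_apply]

theorem normal_space_characterization_general [DecidableEq k]
    {U : Matrix m k K} {V : Matrix n k K} {S : Matrix k k K} (hS : IsUnit S.det)
    {ζU : Matrix m k K} {ζV : Matrix n k K} {ζS : Matrix k k K} :
    (∀ (ηU : Matrix m k K) (ηV : Matrix n k K) (ηS : Matrix k k K),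
      Uᵀ * ηU + ηUᵀ * U = 0 → Vᵀ * ηV + ηVᵀ * V = 0 →
      (ηUᵀ * (ζU * (S * Sᵀ))).trace + (ηSᵀ * ζS).trace
        + (ηVᵀ * (ζV * (Sᵀ * S))).trace = 0)
    ↔ (ζS = 0 ∧ ∃ BU BV : Matrix k k K,
        BUᵀ = BU ∧ BVᵀ = BV ∧
        ζU = U * BU * (S * Sᵀ)⁻¹ ∧ ζV = V * BV * (Sᵀ * S)⁻¹) := by
  have hSt : IsUnit Sᵀ.det := S.isUnit_det_transpose hS
  have normalU := forall_trace_transpose_mul_mul_eq_zero_iff (U := U) (ζ := ζU)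
    (W := S * Sᵀ) (by rw [det_mul]; exact hS.mul hSt)
  have normalV := forall_trace_transpose_mul_mul_eq_zero_iff (U := V) (ζ := ζV)
    (W := Sᵀ * S) (by rw [det_mul]; exact hSt.mul hS)
  constructor
  · intro h
    obtain ⟨BU, hBU, hζU⟩ := normalU.mp fun η hη => by simpa using h η 0 0 hη (by simp)
    obtain ⟨BV, hBV, hζV⟩ := normalV.mp fun η hη => by simpa using h 0 η 0 (by simp) hη
    have hζS : ζS = 0 := forall_trace_transpose_mul_eq_zero_iff.mp fun η => by
      simpa using h 0 0 η (by simp) (by simp)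
    exact ⟨hζS, BU, BV, hBU, hBV, hζU, hζV⟩
  · rintro ⟨hζS, BU, BV, hBU, hBV, hζU, hζV⟩ ηU ηV ηS hηU hηV
    rw [normalU.mpr ⟨BU, hBU, hζU⟩ ηU hηU, normalV.mpr ⟨BV, hBV, hζV⟩ ηV hηV,
      forall_trace_transpose_mul_eq_zero_iff.mpr hζS, add_zero, add_zero]

end NormalSpace

/-- Normal space characterization: a triple `ζ` is `g`-orthogonal to every tangent
triple iff `ζ_Σ = 0` and `ζ_U = U B_U (ΣΣᵀ)⁻¹`, `ζ_V = V B_V (ΣᵀΣ)⁻¹` for some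
symmetric matrices `B_U, B_V`. -/
theorem normal_space_characterization (M r : ℕ)
    (U V : Matrix (Fin M) (Fin r) ℝ) (S : Matrix (Fin r) (Fin r) ℝ)
    (hU : Uᵀ * U = 1) (hV : Vᵀ * V = 1) (hS : IsUnit S.det)
    (ζU ζV : Matrix (Fin M) (Fin r) ℝ) (ζS : Matrix (Fin r) (Fin r) ℝ) :
    (∀ (ηU ηV : Matrix (Fin M) (Fin r) ℝ) (ηS : Matrix (Fin r) (Fin r) ℝ),
      Uᵀ * ηU + ηUᵀ * U = 0 → Vᵀ * ηV + ηVᵀ * V = 0 →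
      (ηUᵀ * (ζU * (S * Sᵀ))).trace + (ηSᵀ * ζS).trace
        + (ηVᵀ * (ζV * (Sᵀ * S))).trace = 0)
    ↔ (ζS = 0 ∧ ∃ BU BV : Matrix (Fin r) (Fin r) ℝ,
        BUᵀ = BU ∧ BVᵀ = BV ∧
        ζU = U * BU * (S * Sᵀ)⁻¹ ∧ ζV = V * BV * (Sᵀ * S)⁻¹) :=
  normal_space_characterization_general hS
end

section
/- Let U, V ∈ ℝ^{M×r} have orthonormal columns (UᵀU = VᵀV = I_r), let Σ ∈ ℝ^{r×r} be invertible, and let (A_U, A_Σ, A_V) ∈ ℝ^{M×r}×ℝ^{r×r}×ℝ^{M×r} be arbitrary. Suppose B_U, B_V ∈ ℝ^{r×r} are symmetric solutions of the Lyapunov equations ΣΣᵀ B_U + B_U ΣΣᵀ = ΣΣᵀ (UᵀA_U + A_UᵀU) ΣΣᵀ and ΣᵀΣ B_V + B_V ΣᵀΣ = ΣᵀΣ (VᵀA_V + A_VᵀV) ΣᵀΣ. Define ξ_U = A_U − U B_U (ΣΣᵀ)^{-1}, ξ_Σ = A_Σ, ξ_V = A_V − V B_V (ΣᵀΣ)^{-1}.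 Then: (i) the triple ξ = (ξ_U, ξ_Σ, ξ_V) lies in the tangent space, i.e., Uᵀξ_U + ξ_UᵀU = 0 and Vᵀξ_V + ξ_VᵀV = 0; and (ii) the residual (A_U − ξ_U, A_Σ − ξ_Σ, A_V − ξ_V) = (U B_U (ΣΣᵀ)^{-1}, 0, V B_V (ΣᵀΣ)^{-1}) satisfies g(η, (A_U − ξ_U, 0, A_V − ξ_V)) = 0 for every tangent triple η. Hence ξ is the g-orthogonal projection of (A_U, A_Σ, A_V) onto the tangent space. -/
open Matrix

/-!
For `P = ΣΣᵀ`, cancelling the two outer factors of the Lyapunov equation turns it into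
`B P⁻¹ + P⁻¹ B = UᵀA + AᵀU`. Its left side is `X + Xᵀ` for `X = Uᵀ (U B P⁻¹)` because `UᵀU = 1`, so
subtracting `U B P⁻¹` from `A` removes exactly the obstruction to tangency. The weight `P` in the
metric cancels the `P⁻¹` of the residual, leaving `Tr(ηᵀU B)`: the trace of a skew-symmetric matrix
times a symmetric one.
-/

section FixedRank

variable {R m n k : Type*} [CommRing R] [Fintype m]

/-- The tangent space at `U` of the Stiefel manifold of matrices with orthonormal columns, written
as the kernel of the derivative of `U ↦ UᵀU`. It makes sense for every `U` and over every
commutative ring. -/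
def stiefelTangentSpace (U : Matrix m k R) : Submodule R (Matrix m k R) where
  carrier := {η | Uᵀ * η + ηᵀ * U = 0}
  zero_mem' := by simp
  add_mem' {η ζ} hη hζ := by
    simp only [Set.mem_ofPred_eq, transpose_add, Matrix.mul_add, Matrix.add_mul] at hη hζ ⊢
    rw [add_add_add_comm, hη, hζ, add_zero]
  smul_mem' c η hη := by
    simp only [Set.mem_ofPred_eq, transpose_smul, Matrix.mul_smul, Matrix.smul_mul] at hη ⊢
    rw [← smul_add, hη, smul_zero]

lemma transpose_transpose_mul_eq_neg {U η : Matrix m k R} (hη : η ∈ stiefelTangentSpace U) :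
    (ηᵀ * U)ᵀ = -(ηᵀ * U) := by
  rw [transpose_mul, transpose_transpose]
  exact eq_neg_of_add_eq_zero_left hη

variable [Fintype n] [Fintype k]

/-- The metric at `(U, S, V)` on triples of matrices that comes from the factorization `U S Vᵀ` of
a matrix of fixed rank. It depends on the base point only through `S`. -/
def fixedRankMetric (S : Matrix k k R) (ξ ζ : Matrix m k R × Matrix k k R × Matrix n k R) : R :=
  (ξ.1ᵀ * (ζ.1 * (S * Sᵀ))).trace + (ξ.2.1ᵀ * ζ.2.1).trace + (ξ.2.2ᵀ * (ζ.2.2 * (Sᵀ * S))).trace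

lemma trace_mul_eq_zero_of_transpose_eq_neg {K B : Matrix k k R} (h2 : IsLeftRegular (2 : R))
    (hK : Kᵀ = -K) (hB : B.IsSymm) : (K * B).trace = 0 := by
  have self_eq_neg : (K * B).trace = -(K * B).trace :=
    calc (K * B).trace = (Bᵀ * Kᵀ).trace := by rw [← transpose_mul, trace_transpose]
      _ = -(K * B).trace := by rw [hB.eq, hK, Matrix.mul_neg, trace_neg, trace_mul_comm]
  apply h2
  linear_combination self_eq_neg

variable [DecidableEq k]

lemma isUnit_det_mul_transpose_self {S : Matrix k k R} (hS : IsUnit S.det) :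
    IsUnit (S * Sᵀ).det := by
  rw [det_mul]
  exact hS.mul (isUnit_det_transpose S hS)

lemma mul_inv_add_inv_mul_of_lyapunov {P B C : Matrix k k R} (hP : IsUnit P.det)
    (h : P * B + B * P = P * C * P) : B * P⁻¹ + P⁻¹ * B = C :=
  calc B * P⁻¹ + P⁻¹ * B = P⁻¹ * (P * B + B * P) * P⁻¹ := by
        rw [Matrix.mul_add, Matrix.add_mul, nonsing_inv_mul_cancel_left _ _ hP,
          ← Matrix.mul_assoc, mul_nonsing_inv_cancel_right _ _ hP]
    _ = C := by
        rw [h, Matrix.mul_assoc P, nonsing_inv_mul_cancel_left _ _ hP,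
          mul_nonsing_inv_cancel_right _ _ hP]

lemma sub_mul_inv_mem_stiefelTangentSpace {U A : Matrix m k R} {P B : Matrix k k R}
    (hU : Uᵀ * U = 1) (hP : IsUnit P.det) (hP_symm : P.IsSymm) (hB : B.IsSymm)
    (h : P * B + B * P = P * (Uᵀ * A + Aᵀ * U) * P) :
    A - U * B * P⁻¹ ∈ stiefelTangentSpace U := by
  have left_part : Uᵀ * (U * B * P⁻¹) = B * P⁻¹ := by
    rw [Matrix.mul_assoc U, ← Matrix.mul_assoc, hU, Matrix.one_mul]
  have right_part : (U * B * P⁻¹)ᵀ * U = P⁻¹ * B := by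
    rw [← transpose_transpose ((U * B * P⁻¹)ᵀ * U), transpose_mul, transpose_transpose, left_part,
      transpose_mul, hP_symm.inv.eq, hB.eq]
  change Uᵀ * (A - U * B * P⁻¹) + (A - U * B * P⁻¹)ᵀ * U = 0
  rw [Matrix.mul_sub, transpose_sub, Matrix.sub_mul, left_part, right_part, sub_add_sub_comm,
    mul_inv_add_inv_mul_of_lyapunov hP h, sub_self]

lemma trace_transpose_mul_mul_inv_mul_eq_zero {U η : Matrix m k R} {P B : Matrix k k R}
    (h2 : IsLeftRegular (2 : R)) (hP : IsUnit P.det) (hB : B.IsSymm)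
    (hη : η ∈ stiefelTangentSpace U) : (ηᵀ * (U * B * P⁻¹ * P)).trace = 0 := by
  rw [nonsing_inv_mul_cancel_right _ _ hP, ← Matrix.mul_assoc]
  exact trace_mul_eq_zero_of_transpose_eq_neg h2 (transpose_transpose_mul_eq_neg hη) hB

theorem tangent_space_projection_general {U AU : Matrix m k R} {V AV : Matrix n k R}
    {S BU BV : Matrix k k R} (h2 : IsLeftRegular (2 : R))
    (hU : Uᵀ * U = 1) (hV : Vᵀ * V = 1) (hS : IsUnit S.det) (hBU : BU.IsSymm) (hBV : BV.IsSymm)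
    (hLU : S * Sᵀ * BU + BU * (S * Sᵀ) = S * Sᵀ * (Uᵀ * AU + AUᵀ * U) * (S * Sᵀ))
    (hLV : Sᵀ * S * BV + BV * (Sᵀ * S) = Sᵀ * S * (Vᵀ * AV + AVᵀ * V) * (Sᵀ * S)) :
    AU - U * BU * (S * Sᵀ)⁻¹ ∈ stiefelTangentSpace U ∧
      AV - V * BV * (Sᵀ * S)⁻¹ ∈ stiefelTangentSpace V ∧
      ∀ ηU ∈ stiefelTangentSpace U, ∀ ηS, ∀ ηV ∈ stiefelTangentSpace V,
        fixedRankMetric S (ηU, ηS, ηV)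
          (U * BU * (S * Sᵀ)⁻¹, 0, V * BV * (Sᵀ * S)⁻¹) = 0 := by
  have hSSt : IsUnit (S * Sᵀ).det := isUnit_det_mul_transpose_self hS
  have hStS : IsUnit (Sᵀ * S).det := isUnit_det_mul_transpose_self (isUnit_det_transpose S hS)
  refine ⟨sub_mul_inv_mem_stiefelTangentSpace hU hSSt (isSymm_mul_transpose_self S) hBU hLU,
    sub_mul_inv_mem_stiefelTangentSpace hV hStS (isSymm_transpose_mul_self S) hBV hLV, ?_⟩
  intro ηU hηU ηS ηV hηV
  rw [fixedRankMetric, trace_transpose_mul_mul_inv_mul_eq_zero h2 hSSt hBU hηU,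
    trace_transpose_mul_mul_inv_mul_eq_zero h2 hStS hBV hηV, Matrix.mul_zero, trace_zero,
    add_zero, add_zero]

end FixedRank

/-- Tangent space projection: if `B_U, B_V` are symmetric solutions of the Lyapunov
equations, then `ξ = (A_U − U B_U (ΣΣᵀ)⁻¹, A_Σ, A_V − V B_V (ΣᵀΣ)⁻¹)` lies in the
tangent space and the residual `(U B_U (ΣΣᵀ)⁻¹, 0, V B_V (ΣᵀΣ)⁻¹)` is `g`-orthogonal
to every tangent triple; hence `ξ` is the `g`-orthogonal projection of
`(A_U, A_Σ, A_V)` onto the tangent space. -/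
theorem tangent_space_projection (M r : ℕ)
    (U V : Matrix (Fin M) (Fin r) ℝ) (S : Matrix (Fin r) (Fin r) ℝ)
    (hU : Uᵀ * U = 1) (hV : Vᵀ * V = 1) (hS : IsUnit S.det)
    (AU AV : Matrix (Fin M) (Fin r) ℝ) (AS : Matrix (Fin r) (Fin r) ℝ)
    (BU BV : Matrix (Fin r) (Fin r) ℝ) (hBU : BUᵀ = BU) (hBV : BVᵀ = BV)
    (hLU : S * Sᵀ * BU + BU * (S * Sᵀ) = S * Sᵀ * (Uᵀ * AU + AUᵀ * U) * (S * Sᵀ))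
    (hLV : Sᵀ * S * BV + BV * (Sᵀ * S) = Sᵀ * S * (Vᵀ * AV + AVᵀ * V) * (Sᵀ * S)) :
    (Uᵀ * (AU - U * BU * (S * Sᵀ)⁻¹) + (AU - U * BU * (S * Sᵀ)⁻¹)ᵀ * U = 0)
    ∧ (Vᵀ * (AV - V * BV * (Sᵀ * S)⁻¹) + (AV - V * BV * (Sᵀ * S)⁻¹)ᵀ * V = 0)
    ∧ (AU - (AU - U * BU * (S * Sᵀ)⁻¹) = U * BU * (S * Sᵀ)⁻¹)
    ∧ (AS - AS = 0)
    ∧ (AV - (AV - V * BV * (Sᵀ * S)⁻¹) = V * BV * (Sᵀ * S)⁻¹)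
    ∧ (∀ (ηU ηV : Matrix (Fin M) (Fin r) ℝ) (ηS : Matrix (Fin r) (Fin r) ℝ),
        Uᵀ * ηU + ηUᵀ * U = 0 → Vᵀ * ηV + ηVᵀ * V = 0 →
        (ηUᵀ * ((U * BU * (S * Sᵀ)⁻¹) * (S * Sᵀ))).trace
          + (ηSᵀ * (0 : Matrix (Fin r) (Fin r) ℝ)).trace
          + (ηVᵀ * ((V * BV * (Sᵀ * S)⁻¹) * (Sᵀ * S))).trace = 0) := by
  obtain ⟨tangent_U, tangent_V, orthogonal⟩ := tangent_space_projection_general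
    (IsRegular.of_ne_zero two_ne_zero).left hU hV hS hBU hBV hLU hLV
  exact ⟨tangent_U, tangent_V, sub_sub_cancel _ _, sub_self _, sub_sub_cancel _ _,
    fun ηU ηV ηS hηU hηV => orthogonal ηU hηU ηS ηV hηV⟩
end

section
/- Let U, V ∈ ℝ^{M×r} have orthonormal columns (UᵀU = VᵀV = I_r), let Σ ∈ ℝ^{r×r}, and let ξ = (ξ_U, ξ_Σ, ξ_V) be any triple. Suppose Θ₁, Θ₂ ∈ ℝ^{r×r} are skew-symmetric matrices solving the coupled Lyapunov equations ΣΣᵀΘ₁ + Θ₁ΣΣᵀ − ΣΘ₂Σᵀ = Skew(Uᵀξ_U ΣΣᵀ) + Skew(Σ ξ_Σᵀ) and ΣᵀΣΘ₂ + Θ₂ΣᵀΣ − ΣᵀΘ₁Σ = Skew(Vᵀξ_V ΣᵀΣ) + Skew(Σᵀ ξ_Σ). Define ζ_U = ξ_U − UΘ₁, ζ_Σ = ξ_Σ + Θ₁Σ − ΣΘ₂, and ζ_V = ξ_V − VΘ₂. Then the matrices S₁(ζ) = ΣΣᵀ ζ_Uᵀ U − Σ ζ_Σᵀ and S₂(ζ)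 = ΣᵀΣ ζ_Vᵀ V + ζ_Σᵀ Σ are symmetric; that is, ζ lies in the horizontal space, and ξ − ζ = (UΘ₁, ΣΘ₂ − Θ₁Σ, VΘ₂) is vertical. -/
/-!
The skew-adjoint part of `S₁` at a vertical vector is minus the Lyapunov operator applied to
`(Θ₁, Θ₂)`, and at `ξ` it is minus the right-hand side of the first Lyapunov equation. As `S₁` is
additive, its skew-adjoint part at `ζ` is the defect of that equation. The second equation is the
first one for the adjoint factorization `VΣᴴUᴴ` of the adjoint matrix, because `S₂` differs from
`S₁` of the adjoint data by a self-adjoint matrix.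
-/

open Matrix

/-- The skew-symmetric part of a square matrix: `Skew(C) = (C − Cᵀ)/2`. -/
noncomputable def skewPart {r : ℕ} (C : Matrix (Fin r) (Fin r) ℝ) : Matrix (Fin r) (Fin r) ℝ :=
  ((2 : ℝ)⁻¹) • (C - Cᵀ)

section SkewAdjointPart

variable (R : Type*) {B : Type*} [Semiring R] [StarMul R] [TrivialStar R] [Invertible (2 : R)]
  [AddCommGroup B] [Module R B] [StarAddMonoid B] [StarModule R B]

lemma skewAdjointPart_eq_zero_iff {x : B} : skewAdjointPart R x = 0 ↔ IsSelfAdjoint x := by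
  refine ⟨fun hx => ?_, fun hx => hx.skewAdjointPart_apply R⟩
  rw [← StarModule.selfAdjointPart_add_skewAdjointPart R x, hx, ZeroMemClass.coe_zero, add_zero]
  exact (selfAdjointPart R x).2

lemma coe_skewAdjointPart_of_mem {x : B} (hx : x ∈ skewAdjoint B) :
    (skewAdjointPart R x : B) = x :=
  congrArg Subtype.val
    (LinearMap.congr_fun (skewAdjointPart_comp_subtype_skewAdjoint R) ⟨x, hx⟩)

lemma skewAdjointPart_star (x : B) : skewAdjointPart R (star x) = -skewAdjointPart R x := by
  ext
  simp only [skewAdjointPart_apply_coe, star_star, NegMemClass.coe_neg, ← smul_neg, neg_sub]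

end SkewAdjointPart

section HorizontalSpace

variable {A m n r s : Type*} [Ring A] [StarRing A] [Fintype m] [Fintype n] [Fintype r] [Fintype s]

/-- The matrix `S₁(η)`, whose symmetry is the first condition on a horizontal vector, with adjoints
in place of transposes. -/
def horizontalForm₁ (U : Matrix m r A) (S : Matrix r s A) (ηU : Matrix m r A)
    (ηS : Matrix r s A) : Matrix r r A :=
  S * Sᴴ * ηUᴴ * U - S * ηSᴴ

/-- The matrix `S₂(η)`, whose symmetry is the second condition on a horizontal vector, with adjoints
in place of transposes. -/
def horizontalForm₂ (V : Matrix n s A) (S : Matrix r s A) (ηV : Matrix n s A)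
    (ηS : Matrix r s A) : Matrix s s A :=
  Sᴴ * S * ηVᴴ * V + ηSᴴ * S

/-- The vector `(ηU, ηS, ηV)` lies in the horizontal space at `(U, S, V)`. The factor `S` may be
rectangular. -/
def IsHorizontal (U : Matrix m r A) (S : Matrix r s A) (V : Matrix n s A)
    (ηU : Matrix m r A) (ηS : Matrix r s A) (ηV : Matrix n s A) : Prop :=
  IsSelfAdjoint (horizontalForm₁ U S ηU ηS) ∧ IsSelfAdjoint (horizontalForm₂ V S ηV ηS)

/-- The left-hand side of the first coupled Lyapunov equation; that of the second one is
`coupledLyapunov Sᴴ Θ₂ Θ₁`. -/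
def coupledLyapunov (S : Matrix r s A) (Θ₁ : Matrix r r A) (Θ₂ : Matrix s s A) : Matrix r r A :=
  S * Sᴴ * Θ₁ + Θ₁ * (S * Sᴴ) - S * Θ₂ * Sᴴ

lemma horizontalForm₁_sub (U : Matrix m r A) (S : Matrix r s A) (ηU ηU' : Matrix m r A)
    (ηS ηS' : Matrix r s A) :
    horizontalForm₁ U S (ηU - ηU') (ηS - ηS') =
      horizontalForm₁ U S ηU ηS - horizontalForm₁ U S ηU' ηS' := by
  simp only [horizontalForm₁, conjTranspose_sub, Matrix.mul_sub, Matrix.sub_mul]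
  abel

lemma horizontalForm₁_vertical [DecidableEq r] {U : Matrix m r A} (hU : Uᴴ * U = 1)
    (S : Matrix r s A) {Θ₁ : Matrix r r A} {Θ₂ : Matrix s s A}
    (hΘ₁ : Θ₁ ∈ skewAdjoint (Matrix r r A)) (hΘ₂ : Θ₂ ∈ skewAdjoint (Matrix s s A)) :
    horizontalForm₁ U S (U * Θ₁) (S * Θ₂ - Θ₁ * S) =
      S * Θ₂ * Sᴴ - (S * Sᴴ * Θ₁ + S * Sᴴ * Θ₁) := by
  rw [skewAdjoint.mem_iff, star_eq_conjTranspose] at hΘ₁ hΘ₂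
  simp only [horizontalForm₁, conjTranspose_sub, conjTranspose_mul, hΘ₁, hΘ₂, Matrix.mul_assoc, hU,
    Matrix.mul_one, Matrix.mul_sub, Matrix.mul_neg, Matrix.neg_mul]
  abel

lemma isSelfAdjoint_horizontalForm₂_iff_conjTranspose (V : Matrix n s A) (S : Matrix r s A)
    (ηV : Matrix n s A) (ηS : Matrix r s A) :
    IsSelfAdjoint (horizontalForm₂ V S ηV ηS) ↔
      IsSelfAdjoint (horizontalForm₁ V Sᴴ ηV ηSᴴ) := by
  have hform : horizontalForm₂ V S ηV ηS =
      horizontalForm₁ V Sᴴ ηV ηSᴴ + (ηSᴴ * S + star (ηSᴴ * S)) := by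
    simp only [horizontalForm₁, horizontalForm₂, star_eq_conjTranspose, conjTranspose_mul,
      conjTranspose_conjTranspose]
    abel
  rw [hform]
  exact (selfAdjoint (Matrix s s A)).add_mem_cancel_right (IsSelfAdjoint.add_star_self _)

section SkewAdjointPart

variable (R : Type*) [Semiring R] [StarMul R] [TrivialStar R] [Invertible (2 : R)] [Module R A]
  [StarModule R A]

lemma skewAdjointPart_horizontalForm₁ (U : Matrix m r A) (S : Matrix r s A) (ηU : Matrix m r A)
    (ηS : Matrix r s A) :
    skewAdjointPart R (horizontalForm₁ U S ηU ηS) =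
      -(skewAdjointPart R (Uᴴ * ηU * (S * Sᴴ)) + skewAdjointPart R (S * ηSᴴ)) := by
  have hstar : S * Sᴴ * ηUᴴ * U = star (Uᴴ * ηU * (S * Sᴴ)) := by
    simp [star_eq_conjTranspose, Matrix.mul_assoc]
  rw [horizontalForm₁, hstar, map_sub, skewAdjointPart_star, neg_add, sub_eq_add_neg]

lemma skewAdjointPart_horizontalForm₁_vertical [DecidableEq r] {U : Matrix m r A}
    (hU : Uᴴ * U = 1) (S : Matrix r s A) {Θ₁ : Matrix r r A} {Θ₂ : Matrix s s A}
    (hΘ₁ : Θ₁ ∈ skewAdjoint (Matrix r r A)) (hΘ₂ : Θ₂ ∈ skewAdjoint (Matrix s s A)) :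
    (skewAdjointPart R (horizontalForm₁ U S (U * Θ₁) (S * Θ₂ - Θ₁ * S)) : Matrix r r A) =
      -coupledLyapunov S Θ₁ Θ₂ := by
  have hskew : S * Θ₂ * Sᴴ ∈ skewAdjoint (Matrix r r A) := by
    rw [skewAdjoint.mem_iff, star_eq_conjTranspose] at hΘ₂ ⊢
    simp only [conjTranspose_mul, conjTranspose_conjTranspose, hΘ₂, Matrix.neg_mul, Matrix.mul_neg,
      Matrix.mul_assoc]
  have hstar : star (S * Sᴴ * Θ₁) = -(Θ₁ * (S * Sᴴ)) := by
    rw [star_mul, skewAdjoint.mem_iff.1 hΘ₁, neg_mul, star_eq_conjTranspose, conjTranspose_mul,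
      conjTranspose_conjTranspose]
  have htwice : (skewAdjointPart R (S * Sᴴ * Θ₁ + S * Sᴴ * Θ₁) : Matrix r r A) =
      S * Sᴴ * Θ₁ + Θ₁ * (S * Sᴴ) := by
    rw [skewAdjointPart_apply_coe, star_add, hstar, ← two_smul R, ← two_smul R, ← smul_sub,
      invOf_smul_smul, sub_neg_eq_add]
  rw [horizontalForm₁_vertical hU S hΘ₁ hΘ₂, map_sub, AddSubgroupClass.coe_sub, htwice,
    coe_skewAdjointPart_of_mem R hskew, coupledLyapunov, neg_sub]

theorem isSelfAdjoint_horizontalForm₁_iff [DecidableEq r] {U : Matrix m r A} (hU : Uᴴ * U = 1)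
    (S : Matrix r s A) (ξU : Matrix m r A) (ξS : Matrix r s A)
    {Θ₁ : Matrix r r A} {Θ₂ : Matrix s s A}
    (hΘ₁ : Θ₁ ∈ skewAdjoint (Matrix r r A)) (hΘ₂ : Θ₂ ∈ skewAdjoint (Matrix s s A)) :
    IsSelfAdjoint (horizontalForm₁ U S (ξU - U * Θ₁) (ξS + Θ₁ * S - S * Θ₂)) ↔
      coupledLyapunov S Θ₁ Θ₂ =
        skewAdjointPart R (Uᴴ * ξU * (S * Sᴴ)) + skewAdjointPart R (S * ξSᴴ) := by
  rw [← sub_sub_eq_add_sub, horizontalForm₁_sub, ← skewAdjointPart_eq_zero_iff R, map_sub,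
    skewAdjointPart_horizontalForm₁, ← ZeroMemClass.coe_eq_zero, AddSubgroupClass.coe_sub,
    skewAdjointPart_horizontalForm₁_vertical R hU S hΘ₁ hΘ₂, NegMemClass.coe_neg, neg_sub_neg,
    sub_eq_zero, AddMemClass.coe_add]

theorem isSelfAdjoint_horizontalForm₂_iff [DecidableEq s] {V : Matrix n s A} (hV : Vᴴ * V = 1)
    (S : Matrix r s A) (ξV : Matrix n s A) (ξS : Matrix r s A)
    {Θ₁ : Matrix r r A} {Θ₂ : Matrix s s A}
    (hΘ₁ : Θ₁ ∈ skewAdjoint (Matrix r r A)) (hΘ₂ : Θ₂ ∈ skewAdjoint (Matrix s s A)) :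
    IsSelfAdjoint (horizontalForm₂ V S (ξV - V * Θ₂) (ξS + Θ₁ * S - S * Θ₂)) ↔
      coupledLyapunov Sᴴ Θ₂ Θ₁ =
        skewAdjointPart R (Vᴴ * ξV * (Sᴴ * S)) + skewAdjointPart R (Sᴴ * ξS) := by
  have hadj : (ξS + Θ₁ * S - S * Θ₂)ᴴ = ξSᴴ + Θ₂ * Sᴴ - Sᴴ * Θ₁ := by
    have hΘ₁' : Θ₁ᴴ = -Θ₁ := hΘ₁
    have hΘ₂' : Θ₂ᴴ = -Θ₂ := hΘ₂
    simp only [conjTranspose_sub, conjTranspose_add, conjTranspose_mul, hΘ₁', hΘ₂',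
      Matrix.mul_neg, Matrix.neg_mul]
    abel
  rw [isSelfAdjoint_horizontalForm₂_iff_conjTranspose, hadj]
  simpa only [conjTranspose_conjTranspose] using
    isSelfAdjoint_horizontalForm₁_iff R hV Sᴴ ξV ξSᴴ hΘ₂ hΘ₁

theorem horizontal_space_projection_general [DecidableEq r] [DecidableEq s]
    {U : Matrix m r A} {V : Matrix n s A} (hU : Uᴴ * U = 1) (hV : Vᴴ * V = 1) (S : Matrix r s A)
    (ξU : Matrix m r A) (ξS : Matrix r s A) (ξV : Matrix n s A)
    {Θ₁ : Matrix r r A} {Θ₂ : Matrix s s A}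
    (hΘ₁ : Θ₁ ∈ skewAdjoint (Matrix r r A)) (hΘ₂ : Θ₂ ∈ skewAdjoint (Matrix s s A)) :
    IsHorizontal U S V (ξU - U * Θ₁) (ξS + Θ₁ * S - S * Θ₂) (ξV - V * Θ₂) ↔
      coupledLyapunov S Θ₁ Θ₂ =
          skewAdjointPart R (Uᴴ * ξU * (S * Sᴴ)) + skewAdjointPart R (S * ξSᴴ) ∧
        coupledLyapunov Sᴴ Θ₂ Θ₁ =
          skewAdjointPart R (Vᴴ * ξV * (Sᴴ * S)) + skewAdjointPart R (Sᴴ * ξS) :=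
  and_congr (isSelfAdjoint_horizontalForm₁_iff R hU S ξU ξS hΘ₁ hΘ₂)
    (isSelfAdjoint_horizontalForm₂_iff R hV S ξV ξS hΘ₁ hΘ₂)

end SkewAdjointPart

end HorizontalSpace

lemma skewPart_eq_skewAdjointPart {r : ℕ} (C : Matrix (Fin r) (Fin r) ℝ) :
    skewPart C = skewAdjointPart ℝ C := by
  simp [skewPart, skewAdjointPart_apply_coe, star_eq_conjTranspose]

/-- Horizontal space projection: if `Θ₁, Θ₂` are skew-symmetric solutions of the
coupled Lyapunov equations, then `ζ = (ξ_U − UΘ₁, ξ_Σ + Θ₁Σ − ΣΘ₂, ξ_V − VΘ₂)` lies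
in the horizontal space (its `S₁, S₂` are symmetric) and `ξ − ζ` is vertical. -/
theorem horizontal_space_projection (M r : ℕ)
    (U V : Matrix (Fin M) (Fin r) ℝ) (S : Matrix (Fin r) (Fin r) ℝ)
    (hU : Uᵀ * U = 1) (hV : Vᵀ * V = 1)
    (ξU ξV : Matrix (Fin M) (Fin r) ℝ) (ξS : Matrix (Fin r) (Fin r) ℝ)
    (Θ₁ Θ₂ : Matrix (Fin r) (Fin r) ℝ) (hΘ₁ : Θ₁ᵀ = -Θ₁) (hΘ₂ : Θ₂ᵀ = -Θ₂)
    (h1 : S * Sᵀ * Θ₁ + Θ₁ * (S * Sᵀ) - S * Θ₂ * Sᵀ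
        = skewPart (Uᵀ * ξU * (S * Sᵀ)) + skewPart (S * ξSᵀ))
    (h2 : Sᵀ * S * Θ₂ + Θ₂ * (Sᵀ * S) - Sᵀ * Θ₁ * S
        = skewPart (Vᵀ * ξV * (Sᵀ * S)) + skewPart (Sᵀ * ξS)) :
    ((S * Sᵀ * (ξU - U * Θ₁)ᵀ * U - S * (ξS + Θ₁ * S - S * Θ₂)ᵀ)ᵀ
        = S * Sᵀ * (ξU - U * Θ₁)ᵀ * U - S * (ξS + Θ₁ * S - S * Θ₂)ᵀ)
    ∧ ((Sᵀ * S * (ξV - V * Θ₂)ᵀ * V + (ξS + Θ₁ * S - S * Θ₂)ᵀ * S)ᵀ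
        = Sᵀ * S * (ξV - V * Θ₂)ᵀ * V + (ξS + Θ₁ * S - S * Θ₂)ᵀ * S)
    ∧ (ξU - (ξU - U * Θ₁) = U * Θ₁)
    ∧ (ξS - (ξS + Θ₁ * S - S * Θ₂) = S * Θ₂ - Θ₁ * S)
    ∧ (ξV - (ξV - V * Θ₂) = V * Θ₂) := by
  simp only [skewPart_eq_skewAdjointPart, ← conjTranspose_eq_transpose_of_trivial] at *
  have hζ := (horizontal_space_projection_general ℝ hU hV S ξU ξS ξV hΘ₁ hΘ₂).2
    ⟨h1, by simpa only [coupledLyapunov, conjTranspose_conjTranspose] using h2⟩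
  exact ⟨hζ.1, hζ.2, sub_sub_cancel _ _, by abel, sub_sub_cancel _ _⟩
end

section
/- Let U, V ∈ ℝ^{M×r} have orthonormal columns (UᵀU = VᵀV = I_r), let Σ ∈ ℝ^{r×r} be invertible, and let A ∈ ℝ^{M×M} be arbitrary (the Euclidean gradient). Suppose B_U, B_V ∈ ℝ^{r×r} are symmetric solutions of the Lyapunov equations ΣΣᵀ B_U + B_U ΣΣᵀ = ΣΣᵀ Uᵀ A V Σᵀ + Σ Vᵀ Aᵀ U ΣΣᵀ and ΣᵀΣ B_V + B_V ΣᵀΣ = ΣᵀΣ Vᵀ Aᵀ U Σ + Σᵀ Uᵀ A V ΣᵀΣ. Define the Riemannian gradient triple ξ_U = A V Σᵀ (ΣΣᵀ)^{-1} − U B_U (ΣΣᵀ)^{-1}, ξ_Σ = Uᵀ A V, ξ_V = Aᵀ U Σ (ΣᵀΣ)^{-1} − V B_V (ΣᵀΣ)^{-1}. Then ξ = (ξ_U, ξ_Σ, ξ_V) lies in the tangent space (Uᵀξ_U + ξ_UᵀU = 0 and Vᵀξ_V + ξ_VᵀV = 0) and moreover S₁(ξ) = ΣΣᵀ ξ_Uᵀ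 U − Σ ξ_Σᵀ and S₂(ξ) = ΣᵀΣ ξ_Vᵀ V + ξ_Σᵀ Σ are symmetric; i.e., the Riemannian gradient is automatically horizontal, so the horizontal-space projection leaves it unchanged. In fact S₁(ξ) = −B_U. -/
open Matrix

/-!
Both Stiefel factors of the gradient have the form `ξ = (W - U B) P⁻¹` with `P` Hermitian and
invertible, so that `Uᴴ ξ = (Uᴴ W - B) P⁻¹` and `ξᴴ U = P⁻¹ (Wᴴ U - B)`. Multiplying the sum of the
two by `P` on both sides turns tangency into the Lyapunov equation for `B`. The second identity also
gives `P ξᴴ U = Wᴴ U - B`. For the left factor `Wᴴ U = S (Uᴴ A V)ᴴ`, which cancels in the first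
horizontality condition and leaves `-B`; for the right factor `Wᴴ V = Sᴴ (Uᴴ A V)`, to which the
second condition adds the conjugate transpose.
-/

section StiefelFactor

variable {m r R : Type*} [Fintype m] [Fintype r] [DecidableEq r] [CommRing R]
  {U W : Matrix m r R} {P B X Y : Matrix r r R}

theorem mul_inv_add_inv_mul_eq_zero (hP : IsUnit P) (h : P * X + Y * P = 0) :
    X * P⁻¹ + P⁻¹ * Y = 0 := by
  have hdet : IsUnit P.det := (isUnit_iff_isUnit_det P).1 hP
  calc
    X * P⁻¹ + P⁻¹ * Y = P⁻¹ * (P * X + Y * P) * P⁻¹ := by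
      rw [Matrix.mul_add, Matrix.add_mul, nonsing_inv_mul_cancel_left P X hdet, ← Matrix.mul_assoc,
        mul_nonsing_inv_cancel_right P (P⁻¹ * Y) hdet]
    _ = 0 := by rw [h, Matrix.mul_zero, Matrix.zero_mul]

/-- The factor `W P⁻¹ - U B P⁻¹` of a Riemannian gradient at a point `U` of a Stiefel manifold whose
metric is weighted by `P`: here `W` is the Euclidean gradient in that factor, and the multiplier `B`
determines the normal component that the projection onto the tangent space removes. -/
noncomputable def stiefelGradient (U W : Matrix m r R) (P B : Matrix r r R) : Matrix m r R :=
  W * P⁻¹ - U * B * P⁻¹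

variable [StarRing R]

/-- The tangent space at `U` of the Stiefel manifold of matrices with orthonormal columns, written
with the conjugate transpose to cover the real and the complex case. -/
def IsStiefelTangent (U η : Matrix m r R) : Prop :=
  Uᴴ * η + ηᴴ * U = 0

theorem conjTranspose_mul_stiefelGradient (hU : Uᴴ * U = 1) :
    Uᴴ * stiefelGradient U W P B = (Uᴴ * W - B) * P⁻¹ := by
  rw [stiefelGradient, ← Matrix.sub_mul, ← Matrix.mul_assoc, Matrix.mul_sub,
    ← Matrix.mul_assoc Uᴴ U B, hU, Matrix.one_mul]

theorem conjTranspose_stiefelGradient_mul (hU : Uᴴ * U = 1) (hP : P.IsHermitian)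
    (hB : B.IsHermitian) :
    (stiefelGradient U W P B)ᴴ * U = P⁻¹ * (Wᴴ * U - B) := by
  simpa only [conjTranspose_mul, conjTranspose_sub, conjTranspose_conjTranspose, hB.eq,
    hP.inv.eq] using
    congrArg conjTranspose (conjTranspose_mul_stiefelGradient (W := W) (P := P) (B := B) hU)

theorem isStiefelTangent_stiefelGradient (hU : Uᴴ * U = 1) (hP : P.IsHermitian)
    (hPu : IsUnit P) (hB : B.IsHermitian)
    (hL : P * B + B * P = P * (Uᴴ * W) + Wᴴ * U * P) :
    IsStiefelTangent U (stiefelGradient U W P B) := by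
  rw [IsStiefelTangent, conjTranspose_mul_stiefelGradient hU,
    conjTranspose_stiefelGradient_mul hU hP hB]
  apply mul_inv_add_inv_mul_eq_zero hPu
  rw [Matrix.mul_sub, Matrix.sub_mul, sub_add_sub_comm, hL, sub_self]

theorem mul_conjTranspose_stiefelGradient_mul (hU : Uᴴ * U = 1) (hP : P.IsHermitian)
    (hPu : IsUnit P) (hB : B.IsHermitian) :
    P * (stiefelGradient U W P B)ᴴ * U = Wᴴ * U - B := by
  rw [Matrix.mul_assoc, conjTranspose_stiefelGradient_mul hU hP hB,
    mul_nonsing_inv_cancel_left P _ ((isUnit_iff_isUnit_det P).1 hPu)]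

end StiefelFactor

section Horizontal

variable {m n r R : Type*} [Fintype m] [Fintype n] [Fintype r] [CommRing R] [StarRing R]

/-- The expression `S₁(η)`, which is Hermitian for horizontal `η`; it involves only the components
`ηU` and `ηS` of `η`. -/
def leftHorizontalForm (U : Matrix m r R) (S : Matrix r r R) (ηU : Matrix m r R)
    (ηS : Matrix r r R) : Matrix r r R :=
  S * Sᴴ * ηUᴴ * U - S * ηSᴴ

/-- The expression `S₂(η)`, which is Hermitian for horizontal `η`; it involves only the components
`ηS` and `ηV` of `η`. -/
def rightHorizontalForm (V : Matrix n r R) (S : Matrix r r R) (ηV : Matrix n r R)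
    (ηS : Matrix r r R) : Matrix r r R :=
  Sᴴ * S * ηVᴴ * V + ηSᴴ * S

variable [DecidableEq r] {U : Matrix m r R} {V : Matrix n r R} {S B BU BV : Matrix r r R}

theorem leftHorizontalForm_stiefelGradient (hU : Uᴴ * U = 1) (hS : IsUnit S)
    (A : Matrix m n R) (V : Matrix n r R) (hB : B.IsHermitian) :
    leftHorizontalForm U S (stiefelGradient U (A * V * Sᴴ) (S * Sᴴ) B) (Uᴴ * A * V) = -B := by
  have hW : (A * V * Sᴴ)ᴴ * U = S * (Uᴴ * A * V)ᴴ := by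
    simp only [conjTranspose_mul, conjTranspose_conjTranspose, Matrix.mul_assoc]
  rw [leftHorizontalForm, mul_conjTranspose_stiefelGradient_mul hU
    (isHermitian_mul_conjTranspose_self S) (hS.mul hS.star) hB, hW,
    sub_sub_cancel_left]

theorem rightHorizontalForm_stiefelGradient (hV : Vᴴ * V = 1) (hS : IsUnit S)
    (A : Matrix m n R) (U : Matrix m r R) (hB : B.IsHermitian) :
    rightHorizontalForm V S (stiefelGradient V (Aᴴ * U * S) (Sᴴ * S) B) (Uᴴ * A * V) =
      Sᴴ * (Uᴴ * A * V) + (Sᴴ * (Uᴴ * A * V))ᴴ - B := by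
  have hW : (Aᴴ * U * S)ᴴ * V = Sᴴ * (Uᴴ * A * V) := by
    simp only [conjTranspose_mul, conjTranspose_conjTranspose, Matrix.mul_assoc]
  rw [rightHorizontalForm, mul_conjTranspose_stiefelGradient_mul hV
    (isHermitian_conjTranspose_mul_self S) (hS.star.mul hS) hB, hW,
    conjTranspose_mul Sᴴ, conjTranspose_conjTranspose, sub_add_eq_add_sub]

theorem riemannian_gradient_horizontal_general (hU : Uᴴ * U = 1) (hV : Vᴴ * V = 1)
    (hS : IsUnit S) (A : Matrix m n R) (hBU : BU.IsHermitian) (hBV : BV.IsHermitian)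
    (hLU : S * Sᴴ * BU + BU * (S * Sᴴ)
      = S * Sᴴ * Uᴴ * A * V * Sᴴ + S * Vᴴ * Aᴴ * U * (S * Sᴴ))
    (hLV : Sᴴ * S * BV + BV * (Sᴴ * S)
      = Sᴴ * S * Vᴴ * Aᴴ * U * S + Sᴴ * Uᴴ * A * V * (Sᴴ * S)) :
    let ξU := stiefelGradient U (A * V * Sᴴ) (S * Sᴴ) BU
    let ξS := Uᴴ * A * V
    let ξV := stiefelGradient V (Aᴴ * U * S) (Sᴴ * S) BV
    IsStiefelTangent U ξU ∧ IsStiefelTangent V ξV ∧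
      (leftHorizontalForm U S ξU ξS).IsHermitian ∧
      (rightHorizontalForm V S ξV ξS).IsHermitian ∧
      leftHorizontalForm U S ξU ξS = -BU := by
  intro ξU ξS ξV
  have hleft : leftHorizontalForm U S ξU ξS = -BU :=
    leftHorizontalForm_stiefelGradient hU hS A V hBU
  have hright : rightHorizontalForm V S ξV ξS = Sᴴ * ξS + (Sᴴ * ξS)ᴴ - BV :=
    rightHorizontalForm_stiefelGradient hV hS A U hBV
  refine ⟨?_, ?_, hleft ▸ hBU.neg, ?_, hleft⟩
  · apply isStiefelTangent_stiefelGradient hU (isHermitian_mul_conjTranspose_self S)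
      (hS.mul hS.star) hBU
    simpa only [conjTranspose_mul, conjTranspose_conjTranspose, Matrix.mul_assoc] using hLU
  · apply isStiefelTangent_stiefelGradient hV (isHermitian_conjTranspose_mul_self S)
      (hS.star.mul hS) hBV
    simpa only [conjTranspose_mul, conjTranspose_conjTranspose, Matrix.mul_assoc] using hLV
  · exact hright ▸ (isHermitian_add_transpose_self _).sub hBV

end Horizontal

/-- The Riemannian gradient triple
`ξ = (A V Σᵀ (ΣΣᵀ)⁻¹ − U B_U (ΣΣᵀ)⁻¹, Uᵀ A V, Aᵀ U Σ (ΣᵀΣ)⁻¹ − V B_V (ΣᵀΣ)⁻¹)`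
lies in the tangent space and is automatically horizontal (`S₁(ξ)` and `S₂(ξ)` are
symmetric); in fact `S₁(ξ) = −B_U`. -/
theorem riemannian_gradient_horizontal (M r : ℕ)
    (U V : Matrix (Fin M) (Fin r) ℝ) (S : Matrix (Fin r) (Fin r) ℝ)
    (hU : Uᵀ * U = 1) (hV : Vᵀ * V = 1) (hS : IsUnit S.det)
    (A : Matrix (Fin M) (Fin M) ℝ)
    (BU BV : Matrix (Fin r) (Fin r) ℝ) (hBU : BUᵀ = BU) (hBV : BVᵀ = BV)
    (hLU : S * Sᵀ * BU + BU * (S * Sᵀ)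
        = S * Sᵀ * Uᵀ * A * V * Sᵀ + S * Vᵀ * Aᵀ * U * (S * Sᵀ))
    (hLV : Sᵀ * S * BV + BV * (Sᵀ * S)
        = Sᵀ * S * Vᵀ * Aᵀ * U * S + Sᵀ * Uᵀ * A * V * (Sᵀ * S)) :
    (Uᵀ * (A * V * Sᵀ * (S * Sᵀ)⁻¹ - U * BU * (S * Sᵀ)⁻¹)
        + (A * V * Sᵀ * (S * Sᵀ)⁻¹ - U * BU * (S * Sᵀ)⁻¹)ᵀ * U = 0)
    ∧ (Vᵀ * (Aᵀ * U * S * (Sᵀ * S)⁻¹ - V * BV * (Sᵀ * S)⁻¹)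
        + (Aᵀ * U * S * (Sᵀ * S)⁻¹ - V * BV * (Sᵀ * S)⁻¹)ᵀ * V = 0)
    ∧ ((S * Sᵀ * (A * V * Sᵀ * (S * Sᵀ)⁻¹ - U * BU * (S * Sᵀ)⁻¹)ᵀ * U
          - S * (Uᵀ * A * V)ᵀ)ᵀ
        = S * Sᵀ * (A * V * Sᵀ * (S * Sᵀ)⁻¹ - U * BU * (S * Sᵀ)⁻¹)ᵀ * U
          - S * (Uᵀ * A * V)ᵀ)
    ∧ ((Sᵀ * S * (Aᵀ * U * S * (Sᵀ * S)⁻¹ - V * BV * (Sᵀ * S)⁻¹)ᵀ * V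
          + (Uᵀ * A * V)ᵀ * S)ᵀ
        = Sᵀ * S * (Aᵀ * U * S * (Sᵀ * S)⁻¹ - V * BV * (Sᵀ * S)⁻¹)ᵀ * V
          + (Uᵀ * A * V)ᵀ * S)
    ∧ (S * Sᵀ * (A * V * Sᵀ * (S * Sᵀ)⁻¹ - U * BU * (S * Sᵀ)⁻¹)ᵀ * U
          - S * (Uᵀ * A * V)ᵀ = -BU) := by
  simp only [← conjTranspose_eq_transpose_of_trivial] at *
  exact riemannian_gradient_horizontal_general hU hV ((isUnit_iff_isUnit_det S).2 hS) A
    hBU hBV hLU hLV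
end
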